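/- Let U ⊆ ℝ^m be open and let W be a smooth strictly positive function on U such that for every g ∈ C_c^∞(U) one has ∫_U Δ(W²)·g² dx ≤ 2·∫_U W²·|∇g|² dx. Then for every f ∈ C_c^∞(U) the Hardy-type inequality ∫_U (|∇W|²/W²)·f² dx ≤ ∫_U |∇f|² dx holds. -/

import Mathlib

open Real MeasureTheory

/-- The Euclidean Laplacian of `f : ℝ^m → ℝ`, as the sum of the second partial
derivatives along the coordinate directions. -/
noncomputable def lap {m : ℕ} (f : EuclideanSpace ℝ (Fin m) → ℝ)
    (x : EuclideanSpace ℝ (Fin m)) : ℝ :=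
  ∑ i : Fin m,
    fderiv ℝ (fun y => fderiv ℝ f y (EuclideanSpace.single i 1)) x (EuclideanSpace.single i 1)

/-!
The substitution `f = g * W` (the ground state transform) turns the Dirichlet energy of `f` into
`∫ W² ‖∇g‖² + (1 / 2) ∫ ⟪∇(W²), ∇(g²)⟫ + ∫ ‖∇W‖² g²`. By Green's identity the middle term is
`-(1 / 2) ∫ Δ(W²) g²`, so the hypothesis applied to `g = f / W` says exactly that the first two
terms have a nonnegative sum; the last one is the left-hand side of the Hardy inequality.
-/

open Function InnerProductSpace
open scoped Gradient Laplacian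

section Support

theorem integrable_mul_of_hasCompactSupport {X : Type*} [TopologicalSpace X] [T2Space X]
    [MeasurableSpace X] [OpensMeasurableSpace X] {μ : Measure X} [IsFiniteMeasureOnCompacts μ]
    {a φ : X → ℝ} (ha : ∀ x ∈ tsupport φ, ContinuousAt a x) (hφ : Continuous φ)
    (hφc : HasCompactSupport φ) : Integrable (fun x => a x * φ x) μ := by
  have haφ : ContinuousOn (fun x => a x * φ x) (tsupport φ) :=
    (continuousOn_of_forall_continuousAt ha).mul hφ.continuousOn
  exact (integrableOn_iff_integrable_of_support_subset
    ((support_mul_subset_right a φ).trans (subset_tsupport φ))).1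
    (haφ.integrableOn_compact' hφc (isClosed_tsupport φ).measurableSet)

theorem tsupport_div_subset_left {X 𝕜 : Type*} [TopologicalSpace X] [DivisionRing 𝕜]
    (f g : X → 𝕜) : tsupport (fun x => f x / g x) ⊆ tsupport f := by
  simpa only [div_eq_mul_inv] using tsupport_mul_subset_left (f := f) (g := fun x => (g x)⁻¹)

theorem contDiff_div_of_tsupport {𝕜 E : Type*} [NontriviallyNormedField 𝕜]
    [NormedAddCommGroup E] [NormedSpace 𝕜 E] {n : WithTop ℕ∞} {f g : E → 𝕜}
    (hf : ContDiff 𝕜 n f) (hg : ∀ x ∈ tsupport f, ContDiffAt 𝕜 n g x)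
    (hg0 : ∀ x ∈ tsupport f, g x ≠ 0) : ContDiff 𝕜 n fun x => f x / g x := by
  refine (contMDiff_of_tsupport fun x hx => ?_).contDiff
  have hxf : x ∈ tsupport f := tsupport_div_subset_left f g hx
  exact (hf.contDiffAt.fun_div (hg x hxf) (hg0 x hxf)).contMDiffAt

end Support

section Gradient

variable {E : Type*} [NormedAddCommGroup E] [InnerProductSpace ℝ E] [CompleteSpace E]
  {f g : E → ℝ} {x : E}

theorem gradient_of_notMem_tsupport (hx : x ∉ tsupport f) : ∇ f x = 0 := by
  rw [gradient, fderiv_of_notMem_tsupport ℝ hx, map_zero]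

theorem tsupport_norm_gradient_sq_subset : tsupport (fun y => ‖∇ f y‖ ^ 2) ⊆ tsupport f := by
  refine closure_minimal (fun y hy => ?_) (isClosed_tsupport f)
  contrapose! hy
  simp [gradient_of_notMem_tsupport hy]

theorem inner_gradient_gradient_eq_sum {ι : Type*} [Fintype ι] (b : OrthonormalBasis ι ℝ E)
    (f g : E → ℝ) (x : E) :
    ⟪∇ f x, ∇ g x⟫_ℝ = ∑ i, fderiv ℝ f x (b i) * fderiv ℝ g x (b i) := by
  rw [← b.sum_inner_mul_inner]
  simp only [inner_gradient_left, inner_gradient_right, conj_trivial]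

theorem continuousAt_gradient (hf : ContDiffAt ℝ 1 f x) : ContinuousAt (∇ f) x :=
  (toDual ℝ E).symm.continuous.continuousAt.comp (hf.continuousAt_fderiv one_ne_zero)

theorem gradient_fun_mul (hf : DifferentiableAt ℝ f x) (hg : DifferentiableAt ℝ g x) :
    ∇ (fun y => f y * g y) x = f x • ∇ g x + g x • ∇ f x := by
  simp only [gradient, fderiv_fun_mul hf hg, map_add, map_smulₛₗ, conj_trivial]

theorem gradient_fun_sq (hf : DifferentiableAt ℝ f x) :
    ∇ (fun y => f y ^ 2) x = (2 * f x) • ∇ f x := by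
  simp only [sq, gradient_fun_mul hf hf, two_mul, add_smul]

theorem norm_gradient_fun_mul_sq (hf : DifferentiableAt ℝ f x) (hg : DifferentiableAt ℝ g x) :
    ‖∇ (fun y => f y * g y) x‖ ^ 2 =
      g x ^ 2 * ‖∇ f x‖ ^ 2 + 1 / 2 * ⟪∇ (fun y => g y ^ 2) x, ∇ (fun y => f y ^ 2) x⟫_ℝ +
        ‖∇ g x‖ ^ 2 * f x ^ 2 := by
  rw [gradient_fun_mul hf hg, gradient_fun_sq hf, gradient_fun_sq hg, norm_add_sq_real]
  simp only [norm_smul, mul_pow, norm_eq_abs, sq_abs, real_inner_smul_left, real_inner_smul_right]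
  ring

end Gradient

section Laplacian

variable {E : Type*} [NormedAddCommGroup E] [InnerProductSpace ℝ E] [FiniteDimensional ℝ E]
  {ι : Type*} [Fintype ι] {f : E → ℝ} {x : E}

theorem laplacian_eq_sum_fderiv_fderiv (b : OrthonormalBasis ι ℝ E) (hf : ContDiffAt ℝ 2 f x) :
    Δ f x = ∑ i, fderiv ℝ (fun y => fderiv ℝ f y (b i)) x (b i) := by
  have hf' : DifferentiableAt ℝ (fderiv ℝ f) x :=
    (hf.fderiv_right (m := 1) le_rfl).differentiableAt one_ne_zero
  simp [laplacian_eq_iteratedFDeriv_orthonormalBasis f b, iteratedFDeriv_two_apply,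
    fderiv_clm_apply hf' (differentiableAt_const _)]

theorem lap_eq_laplacian {m : ℕ} {f : EuclideanSpace ℝ (Fin m) → ℝ}
    {x : EuclideanSpace ℝ (Fin m)} (hf : ContDiffAt ℝ 2 f x) : lap f x = Δ f x := by
  simp only [laplacian_eq_sum_fderiv_fderiv (EuclideanSpace.basisFun (Fin m) ℝ) hf, lap,
    EuclideanSpace.basisFun_apply]

theorem setIntegral_lap_mul {m : ℕ} {μ : Measure (EuclideanSpace ℝ (Fin m))}
    {U : Set (EuclideanSpace ℝ (Fin m))} {f : EuclideanSpace ℝ (Fin m) → ℝ} (hU : IsOpen U)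
    (hf : ContDiffOn ℝ 2 f U) (φ : EuclideanSpace ℝ (Fin m) → ℝ) :
    ∫ x in U, lap f x * φ x ∂μ = ∫ x in U, Δ f x * φ x ∂μ :=
  setIntegral_congr_fun hU.measurableSet fun x hx => by
    simp only [lap_eq_laplacian (hf.contDiffAt (hU.mem_nhds hx))]

end Laplacian

section IntegrationByParts

variable {E : Type*} [NormedAddCommGroup E] [NormedSpace ℝ E] [MeasurableSpace E]
  {μ : Measure E} {u φ : E → ℝ}

theorem integrable_mul_fderiv_apply [OpensMeasurableSpace E] [IsFiniteMeasureOnCompacts μ]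
    (hu : ∀ x ∈ tsupport φ, ContinuousAt u x) (hφ : ContDiff ℝ 1 φ) (hφc : HasCompactSupport φ)
    (v : E) :
    Integrable (fun x => u x * fderiv ℝ φ x v) μ :=
  integrable_mul_of_hasCompactSupport
    (fun x hx => hu x (tsupport_fderiv_apply_subset ℝ v hx))
    ((hφ.continuous_fderiv one_ne_zero).clm_apply continuous_const) (hφc.fderiv_apply ℝ v)

theorem integrable_fderiv_apply_mul [OpensMeasurableSpace E] [IsFiniteMeasureOnCompacts μ]
    (hu : ∀ x ∈ tsupport φ, ContDiffAt ℝ 1 u x) (hφ : Continuous φ) (hφc : HasCompactSupport φ)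
    (v : E) :
    Integrable (fun x => fderiv ℝ u x v * φ x) μ :=
  integrable_mul_of_hasCompactSupport
    (fun x hx => ((hu x hx).continuousAt_fderiv one_ne_zero).clm_apply continuousAt_const) hφ hφc

theorem integral_fderiv_apply_mul_eq_neg [FiniteDimensional ℝ E] [BorelSpace E]
    [μ.IsAddHaarMeasure] (hu : ∀ x ∈ tsupport φ, ContDiffAt ℝ 1 u x)
    (hφ : ContDiff ℝ 1 φ) (hφc : HasCompactSupport φ) (v : E) :
    ∫ x, fderiv ℝ u x v * φ x ∂μ = -∫ x, u x * fderiv ℝ φ x v ∂μ := by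
  have hu_cont : ∀ x ∈ tsupport φ, ContinuousAt u x := fun x hx => (hu x hx).continuousAt
  rw [integral_mul_fderiv_eq_neg_fderiv_mul_of_integrable
    (integrable_fderiv_apply_mul hu hφ.continuous hφc v)
    (integrable_mul_fderiv_apply hu_cont hφ hφc v)
    (integrable_mul_of_hasCompactSupport hu_cont hφ.continuous hφc)
    (fun x hx => (hu x hx).differentiableAt one_ne_zero)
    (fun x _ => hφ.differentiable one_ne_zero x), neg_neg]

end IntegrationByParts

section Green

variable {E : Type*} [NormedAddCommGroup E] [InnerProductSpace ℝ E] [FiniteDimensional ℝ E]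
  [MeasurableSpace E] [BorelSpace E] {μ : Measure E} {u φ : E → ℝ}

theorem integrable_mul_norm_gradient_sq [IsFiniteMeasureOnCompacts μ]
    (hu : ∀ x ∈ tsupport φ, ContinuousAt u x) (hφ : ContDiff ℝ 1 φ) (hφc : HasCompactSupport φ) :
    Integrable (fun x => u x * ‖∇ φ x‖ ^ 2) μ :=
  integrable_mul_of_hasCompactSupport (fun x hx => hu x (tsupport_norm_gradient_sq_subset hx))
    (continuous_iff_continuousAt.2 fun _ => (continuousAt_gradient hφ.contDiffAt).norm.pow 2)
    (hφc.of_isClosed_subset (isClosed_tsupport _) tsupport_norm_gradient_sq_subset)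

theorem integrable_inner_gradient [IsFiniteMeasureOnCompacts μ]
    (hu : ∀ x ∈ tsupport φ, ContDiffAt ℝ 1 u x) (hφ : ContDiff ℝ 1 φ) (hφc : HasCompactSupport φ) :
    Integrable (fun x => ⟪∇ u x, ∇ φ x⟫_ℝ) μ := by
  simp only [inner_gradient_gradient_eq_sum (stdOrthonormalBasis ℝ E)]
  exact integrable_finsetSum _ fun i _ => integrable_mul_fderiv_apply
    (fun x hx => ((hu x hx).continuousAt_fderiv one_ne_zero).clm_apply continuousAt_const) hφ hφc _

theorem integral_laplacian_mul_eq_neg [μ.IsAddHaarMeasure]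
    (hu : ∀ x ∈ tsupport φ, ContDiffAt ℝ 2 u x) (hφ : ContDiff ℝ 1 φ) (hφc : HasCompactSupport φ) :
    ∫ x, Δ u x * φ x ∂μ = -∫ x, ⟪∇ u x, ∇ φ x⟫_ℝ ∂μ := by
  let b := stdOrthonormalBasis ℝ E
  have hu' (i) : ∀ x ∈ tsupport φ, ContDiffAt ℝ 1 (fun y => fderiv ℝ u y (b i)) x :=
    fun x hx => ((hu x hx).fderiv_right le_rfl).clm_apply contDiffAt_const
  have hΔ (x) : Δ u x * φ x = ∑ i, fderiv ℝ (fun y => fderiv ℝ u y (b i)) x (b i) * φ x := by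
    by_cases hx : x ∈ tsupport φ
    · rw [laplacian_eq_sum_fderiv_fderiv b (hu x hx), Finset.sum_mul]
    · simp [image_eq_zero_of_notMem_tsupport hx]
  calc ∫ x, Δ u x * φ x ∂μ
      = ∑ i, ∫ x, fderiv ℝ (fun y => fderiv ℝ u y (b i)) x (b i) * φ x ∂μ := by
        simp only [hΔ]
        exact integral_finsetSum _ fun i _ =>
          integrable_fderiv_apply_mul (hu' i) hφ.continuous hφc (b i)
    _ = -∑ i, ∫ x, fderiv ℝ u x (b i) * fderiv ℝ φ x (b i) ∂μ := by
        simp only [integral_fderiv_apply_mul_eq_neg (hu' _) hφ hφc, Finset.sum_neg_distrib]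
    _ = -∫ x, ⟪∇ u x, ∇ φ x⟫_ℝ ∂μ := by
        simp only [inner_gradient_gradient_eq_sum b]
        rw [integral_finsetSum _ fun i _ => integrable_mul_fderiv_apply
          (fun x hx => (hu' i x hx).continuousAt) hφ hφc (b i)]

end Green

section GroundState

variable {E : Type*} [NormedAddCommGroup E] [InnerProductSpace ℝ E] [FiniteDimensional ℝ E]
  [MeasurableSpace E] [BorelSpace E] {μ : Measure E} [μ.IsAddHaarMeasure] {w g : E → ℝ}

theorem integral_norm_gradient_mul_sq (hw : ∀ x ∈ tsupport g, ContDiffAt ℝ 2 w x)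
    (hg : ContDiff ℝ 1 g) (hgc : HasCompactSupport g) :
    ∫ x, ‖∇ (fun y => g y * w y) x‖ ^ 2 ∂μ =
      (∫ x, w x ^ 2 * ‖∇ g x‖ ^ 2 ∂μ) - 1 / 2 * (∫ x, Δ (fun y => w y ^ 2) x * g x ^ 2 ∂μ) +
        ∫ x, ‖∇ w x‖ ^ 2 * g x ^ 2 ∂μ := by
  have hw1 : ∀ x ∈ tsupport g, ContDiffAt ℝ 1 w x :=
    fun x hx => (hw x hx).of_le one_le_two
  have hg2 : tsupport (fun y => g y ^ 2) ⊆ tsupport g :=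
    tsupport_comp_subset (g := fun t : ℝ => t ^ 2) (zero_pow two_ne_zero) g
  have hg2c : HasCompactSupport fun y => g y ^ 2 :=
    hgc.of_isClosed_subset (isClosed_tsupport _) hg2
  have h_energy : Integrable (fun x => w x ^ 2 * ‖∇ g x‖ ^ 2) μ :=
    integrable_mul_norm_gradient_sq (fun x hx => (hw x hx).continuousAt.pow 2) hg hgc
  have h_cross : Integrable (fun x => ⟪∇ (fun y => w y ^ 2) x, ∇ (fun y => g y ^ 2) x⟫_ℝ) μ :=
    integrable_inner_gradient (fun x hx => (hw1 x (hg2 hx)).pow 2) (hg.pow 2) hg2c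
  have h_potential : Integrable (fun x => ‖∇ w x‖ ^ 2 * g x ^ 2) μ :=
    integrable_mul_of_hasCompactSupport
      (fun x hx => (continuousAt_gradient (hw1 x (hg2 hx))).norm.pow 2) (hg.continuous.pow 2) hg2c
  have h_pointwise (x) : ‖∇ (fun y => g y * w y) x‖ ^ 2 = w x ^ 2 * ‖∇ g x‖ ^ 2 +
      1 / 2 * ⟪∇ (fun y => w y ^ 2) x, ∇ (fun y => g y ^ 2) x⟫_ℝ + ‖∇ w x‖ ^ 2 * g x ^ 2 := by
    by_cases hx : x ∈ tsupport g
    · exact norm_gradient_fun_mul_sq (hg.differentiable one_ne_zero x)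
        ((hw1 x hx).differentiableAt one_ne_zero)
    · have hgw : x ∉ tsupport fun y => g y * w y := fun h => hx (tsupport_mul_subset_left h)
      simp [gradient_of_notMem_tsupport hgw, gradient_of_notMem_tsupport hx,
        gradient_of_notMem_tsupport (fun h => hx (hg2 h)), image_eq_zero_of_notMem_tsupport hx]
  have h_sum : Integrable (fun x => w x ^ 2 * ‖∇ g x‖ ^ 2 +
      1 / 2 * ⟪∇ (fun y => w y ^ 2) x, ∇ (fun y => g y ^ 2) x⟫_ℝ) μ :=
    h_energy.add (h_cross.const_mul _)
  have h_green := integral_laplacian_mul_eq_neg (μ := μ)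
    (fun x hx => (hw x (hg2 hx)).pow 2) (hg.pow 2) hg2c
  simp only [h_pointwise]
  rw [integral_add h_sum h_potential, integral_add h_energy (h_cross.const_mul _),
    integral_const_mul, h_green]
  ring

end GroundState

section Hardy

variable {E : Type*} [NormedAddCommGroup E] [InnerProductSpace ℝ E] [FiniteDimensional ℝ E]
  [MeasurableSpace E] [BorelSpace E] {μ : Measure E} [μ.IsAddHaarMeasure] {W f : E → ℝ}

theorem hardy_of_laplacian_sq_mul_quotient_sq_le (hW : ∀ x ∈ tsupport f, ContDiffAt ℝ 2 W x)
    (hW0 : ∀ x ∈ tsupport f, W x ≠ 0) (hf : ContDiff ℝ 1 f) (hfc : HasCompactSupport f)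
    (h : ∫ x, Δ (fun y => W y ^ 2) x * (f x / W x) ^ 2 ∂μ ≤
      2 * ∫ x, W x ^ 2 * ‖∇ (fun y => f y / W y) x‖ ^ 2 ∂μ) :
    ∫ x, ‖∇ W x‖ ^ 2 / W x ^ 2 * f x ^ 2 ∂μ ≤ ∫ x, ‖∇ f x‖ ^ 2 ∂μ := by
  have hsupp : tsupport (fun y => f y / W y) ⊆ tsupport f := tsupport_div_subset_left f W
  have hmul : (fun y => f y / W y * W y) = f := by
    funext y
    by_cases hy : y ∈ tsupport f
    · exact div_mul_cancel₀ _ (hW0 y hy)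
    · simp [image_eq_zero_of_notMem_tsupport hy]
  have h_energy := integral_norm_gradient_mul_sq (μ := μ) (fun x hx => hW x (hsupp hx))
    (contDiff_div_of_tsupport hf (fun x hx => (hW x hx).of_le one_le_two) hW0)
    (hfc.of_isClosed_subset (isClosed_tsupport _) hsupp)
  have h_potential (x) : ‖∇ W x‖ ^ 2 / W x ^ 2 * f x ^ 2 = ‖∇ W x‖ ^ 2 * (f x / W x) ^ 2 := by
    ring
  rw [hmul] at h_energy
  simp only [h_potential]
  linarith

theorem hardy_from_weighted_contractivity_general {n : WithTop ℕ∞} (hn : 2 ≤ n) {U : Set E}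
    (hU : IsOpen U) (hW : ContDiffOn ℝ n W U) (hW0 : ∀ x ∈ U, W x ≠ 0)
    (hmain : ∀ g : E → ℝ, ContDiff ℝ n g → HasCompactSupport g → tsupport g ⊆ U →
      ∫ x in U, Δ (fun y => W y ^ 2) x * g x ^ 2 ∂μ ≤ 2 * ∫ x in U, W x ^ 2 * ‖∇ g x‖ ^ 2 ∂μ)
    (hf : ContDiff ℝ n f) (hfc : HasCompactSupport f) (hfU : tsupport f ⊆ U) :
    ∫ x in U, ‖∇ W x‖ ^ 2 / W x ^ 2 * f x ^ 2 ∂μ ≤ ∫ x in U, ‖∇ f x‖ ^ 2 ∂μ := by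
  have hWat : ∀ x ∈ tsupport f, ContDiffAt ℝ n W x := fun x hx =>
    hW.contDiffAt (hU.mem_nhds (hfU hx))
  have hW0' : ∀ x ∈ tsupport f, W x ≠ 0 := fun x hx => hW0 x (hfU hx)
  have hsupp : tsupport (fun y => f y / W y) ⊆ tsupport f := tsupport_div_subset_left f W
  have hquot := hmain _ (contDiff_div_of_tsupport hf hWat hW0')
    (hfc.of_isClosed_subset (isClosed_tsupport _) hsupp) (hsupp.trans hfU)
  have hf_zero : ∀ x ∉ U, f x = 0 := fun x hx =>
    image_eq_zero_of_notMem_tsupport fun h => hx (hfU h)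
  have hgrad_zero {φ : E → ℝ} (hφ : tsupport φ ⊆ tsupport f) : ∀ x ∉ U, ∇ φ x = 0 := fun x hx =>
    gradient_of_notMem_tsupport fun h => hx (hfU (hφ h))
  rw [setIntegral_eq_integral_of_forall_compl_eq_zero fun x hx => by simp [hf_zero x hx],
    setIntegral_eq_integral_of_forall_compl_eq_zero fun x hx => by
      simp [hgrad_zero hsupp x hx]] at hquot
  rw [setIntegral_eq_integral_of_forall_compl_eq_zero fun x hx => by simp [hf_zero x hx],
    setIntegral_eq_integral_of_forall_compl_eq_zero fun x hx => by
      simp [hgrad_zero subset_rfl x hx]]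
  exact hardy_of_laplacian_sq_mul_quotient_sq_le (fun x hx => (hWat x hx).of_le hn) hW0'
    (hf.of_le (one_le_two.trans hn)) hfc hquot

end Hardy

theorem hardy_from_weighted_contractivity {m : ℕ}
    (U : Set (EuclideanSpace ℝ (Fin m))) (hU : IsOpen U)
    (W : EuclideanSpace ℝ (Fin m) → ℝ)
    (hW : ContDiffOn ℝ (⊤ : ℕ∞) W U) (hWpos : ∀ x ∈ U, 0 < W x)
    (hmain : ∀ g : EuclideanSpace ℝ (Fin m) → ℝ,
      ContDiff ℝ (⊤ : ℕ∞) g → HasCompactSupport g → tsupport g ⊆ U →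
      ∫ x in U, lap (fun y => (W y) ^ 2) x * (g x) ^ 2
        ≤ 2 * ∫ x in U, (W x) ^ 2 * ‖gradient g x‖ ^ 2) :
    ∀ f : EuclideanSpace ℝ (Fin m) → ℝ,
      ContDiff ℝ (⊤ : ℕ∞) f → HasCompactSupport f → tsupport f ⊆ U →
      ∫ x in U, ‖gradient W x‖ ^ 2 / (W x) ^ 2 * (f x) ^ 2
        ≤ ∫ x in U, ‖gradient f x‖ ^ 2 := by
  intro f
  refine hardy_from_weighted_contractivity_general (n := (⊤ : ℕ∞)) ENat.LEInfty.out hU hW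
    (fun x hx => (hWpos x hx).ne') fun g hg hgc hgU => ?_
  rw [← setIntegral_lap_mul hU ((hW.pow 2).of_le ENat.LEInfty.out)]
  exact hmain g hg hgc hgU
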